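/- Let k, n ∈ ℕ with n ≥ 1, let y, x₁, …, xₙ be variables, and let t be the nested level imax(imax(⋯imax(sᵏ(y), x₁)⋯, x_{n−1}), xₙ). Then for every valuation σ, ⟦t⟧σ = max over i = 1, …, n of ⟦A({x_{i+1}, …, xₙ}, xᵢ, 0)⟧σ (so in particular the i = n term is ⟦A(∅, xₙ, 0)⟧σ) together with ⟦A({x₁, …, xₙ}, y, k)⟧σ. Likewise, if t = imax(imax(⋯imax(sᵏ(0), x₁)⋯, x_{n−1}), xₙ), then for every valuation σ, ⟦t⟧σ = max over i = 1, …, n of ⟦A({x_{i+1}, …, xₙ}, xᵢ, 0)⟧σ together with ⟦B({x₁, …, xₙ}, k)⟧σ. -/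

import Mathlib

/-- The impredicative maximum on natural numbers. -/
def imaxN : ℕ → ℕ → ℕ
  | _, 0 => 0
  | i, (j+1) => max i (j+1)

/-- Levels: t ::= 0 | s(t) | x | max(t,t) | imax(t,t). -/
inductive Lvl where
  | zero : Lvl
  | succ : Lvl → Lvl
  | var : ℕ → Lvl
  | lmax : Lvl → Lvl → Lvl
  | limax : Lvl → Lvl → Lvl

/-- Value of a level under a valuation. -/
def evalL (σ : ℕ → ℕ) : Lvl → ℕ
  | .zero => 0
  | .succ t => evalL σ t + 1
  | .var x => σ x
  | .lmax u v => max (evalL σ u) (evalL σ v)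
  | .limax u v => imaxN (evalL σ u) (evalL σ v)

/-- Maximum of a list of naturals, 0 for the empty list. -/
def listMax (l : List ℕ) : ℕ := l.foldr max 0

/-- Sublevels A(E,x,S) and B(E,S). -/
inductive SubLvl where
  | A : Finset ℕ → ℕ → ℕ → SubLvl
  | B : Finset ℕ → ℕ → SubLvl
deriving DecidableEq

/-- Value of a sublevel under a valuation. -/
def evalS (σ : ℕ → ℕ) : SubLvl → ℕ
  | .A E x S => if ∃ y ∈ E, σ y = 0 then 0 else σ x + S
  | .B E S => if ∃ y ∈ E, σ y = 0 then 0 else S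

/-- Wellformed sublevels. -/
def Wf : SubLvl → Prop
  | .A E x _ => x ∈ E
  | .B _ S => 0 < S

/-- Semantic comparison of sublevels. -/
def leT (u v : SubLvl) : Prop := ∀ σ : ℕ → ℕ, evalS σ u ≤ evalS σ v

/-- Nested imax: `nest b [x₁,…,xₙ] = imax(imax(⋯imax(b, x₁)⋯, x_{n−1}), xₙ)`. -/
def nest (b : Lvl) (xs : List ℕ) : Lvl :=
  xs.foldl (fun a x => Lvl.limax a (.var x)) b

theorem nest_aux (σ : ℕ → ℕ) (xs : List ℕ) : ∀ b : Lvl,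
    evalL σ (nest b xs) =
        max (listMax ((List.range xs.length).map
              (fun i => evalS σ (SubLvl.A ((xs.drop (i+1)).toFinset) (xs.getD i 0) 0))))
            (evalS σ (SubLvl.B xs.toFinset (evalL σ b))) := by
  induction xs with
  | nil => intro b; simp [nest, listMax, evalS]
  | cons x xs ih =>
    intro b
    have h : nest b (x :: xs) = nest (Lvl.limax b (.var x)) xs := rfl
    rw [h, ih, List.length_cons, List.range_succ_eq_map, List.map_cons, List.map_map]
    have h2 : ∀ a l, listMax (a :: l) = max a (listMax l) := fun _ _ => rfl
    rw [h2]
    have h3 : ((fun i => evalS σ (SubLvl.A (((x :: xs).drop (i+1)).toFinset)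
        ((x :: xs).getD i 0) 0)) ∘ Nat.succ) =
        (fun i => evalS σ (SubLvl.A ((xs.drop (i+1)).toFinset) (xs.getD i 0) 0)) := by
      funext i
      simp
    rw [h3]
    generalize listMax _ = M
    simp only [evalS, evalL, List.toFinset_cons, Finset.mem_insert, exists_eq_or_imp,
      List.drop_succ_cons, List.drop_zero, List.getD_cons_zero]
    by_cases hE : ∃ y ∈ xs.toFinset, σ y = 0
    · simp only [hE, if_true, or_true]; omega
    · rcases hx : σ x with _ | m
      · simp [hE, imaxN]
      · simp only [hE, imaxN, if_false, or_false, Nat.add_eq_zero_iff, one_ne_zero, and_false]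
        omega

theorem evalL_iter (σ : ℕ → ℕ) (k : ℕ) (b : Lvl) :
    evalL σ (Lvl.succ^[k] b) = evalL σ b + k := by
  induction k with
  | zero => rfl
  | succ k ih => rw [Function.iterate_succ_apply', evalL, ih]; rfl

theorem nested_imax_as_max_of_sublevels (k y : ℕ) (xs : List ℕ) (hxs : xs ≠ []) :
    (∀ σ : ℕ → ℕ,
      evalL σ (nest (Lvl.succ^[k] (Lvl.var y)) xs) =
        max (listMax ((List.range xs.length).map
              (fun i => evalS σ (SubLvl.A ((xs.drop (i+1)).toFinset) (xs.getD i 0) 0))))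
            (evalS σ (SubLvl.A xs.toFinset y k))) ∧
    (∀ σ : ℕ → ℕ,
      evalL σ (nest (Lvl.succ^[k] Lvl.zero) xs) =
        max (listMax ((List.range xs.length).map
              (fun i => evalS σ (SubLvl.A ((xs.drop (i+1)).toFinset) (xs.getD i 0) 0))))
            (evalS σ (SubLvl.B xs.toFinset k))) := by
  refine ⟨fun σ => ?_, fun σ => ?_⟩
  · rw [nest_aux, evalL_iter]; rfl
  · rw [nest_aux, evalL_iter]; simp [evalL]
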